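/- For integers k, n ≥ 1 let a_{k,n} := 1/(n+k+1/2) + 1/(n−k+1/2). For every square-summable real sequence x = (x_n)_{n≥1}, the series (Ax)_k := ∑_{n=1}^∞ a_{k,n} x_n converges for every k ≥ 1, the sequence Ax is square-summable, and 2√2·‖x‖ ≤ ‖Ax‖ ≤ π·‖x‖, where ‖·‖ denotes the ℓ² norm. -/

import Mathlib

/-!
Since `2 ∫₀^π sin((n+1/2)t) cos(kt) dt = a_{k,n}`, the matrix `A/π` consists of the coordinates of
the orthonormal functions `√(2/π) sin((n+1/2)t)`, `n ≥ 1`, in the orthonormal cosine basis of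
`L²(0,π)`, with the coordinate along the constant function left out. Restoring that coordinate
gives an isometry, so that
`‖Ax‖² = π² ‖x‖² - 2 (∑ c_n x_n)²` with `c_n = 1/(n+1/2)`.
The upper bound is immediate. The lower bound is Cauchy–Schwarz together with
`∑_{n ≥ 1} c_n² = π²/2 - 4`, since `π² - 2(π²/2 - 4) = 8`.

No integral is used below: the orthonormality of the extended columns (`hasSum_col`) amounts to
`AᵀA = π² I - 2 c cᵀ` (`hasSum_gram`), which follows by partial fractions from the cotangent
expansion at half-integers (`hasSum_cot_half`) and from `∑_{j ∈ ℤ} 1/(j+1/2)² = π²`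
(`hasSum_shift_sq`). Orthonormality is turned into the isometry by `parseval_of_orthonormal`.
Indices are shifted as in the statement: `x n` stands for `x_{n+1}`, so `c` appears as `1/(n+3/2)`.
-/

/-- The matrix entries `a_{k,n} = 1/(n+k+1/2) + 1/(n−k+1/2)`, for `k, n ≥ 1`. -/
noncomputable def aMat (k n : ℕ) : ℝ :=
  1 / ((n : ℝ) + (k : ℝ) + 1 / 2) + 1 / ((n : ℝ) - (k : ℝ) + 1 / 2)

lemma HasSum.congr_real {f g : ℕ → ℝ} {a b : ℝ} (h : HasSum f a) (hfg : ∀ n, g n = f n)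
    (hab : b = a) : HasSum g b := by
  obtain rfl : g = f := funext hfg
  rwa [hab]

/-- Synthesis along an orthonormal sequence `v 0, v 1, …` of `ℓ²`: the coordinatewise series
`∑ x_n v_n` converge, and Parseval's identity holds. -/
lemma parseval_of_orthonormal (v : ℕ → ℕ → ℝ)
    (hv : ∀ n m, HasSum (fun k => v n k * v m k) (if n = m then 1 else 0))
    (x : ℕ → ℝ) (hx : Summable fun n => x n ^ 2) :
    (∀ k, Summable fun n => v n k * x n) ∧
      HasSum (fun k => (∑' n, v n k * x n) ^ 2) (∑' n, x n ^ 2) := by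
  have mem : ∀ y : ℕ → ℝ, Summable (fun n => y n ^ 2) → Memℓp y 2 := fun y hy => by
    refine memℓp_gen ?_
    simpa using hy
  have normsq : ∀ f : lp (fun _ : ℕ => ℝ) 2, HasSum (fun n => f n ^ 2) (‖f‖ ^ 2) := fun f => by
    simpa using lp.hasSum_norm (p := 2) (by norm_num) f
  let V : ℕ → lp (fun _ : ℕ => ℝ) 2 := fun n =>
    ⟨v n, mem _ (by simpa [sq] using (hv n n).summable)⟩
  have hV : Orthonormal ℝ V := by
    rw [orthonormal_iff_ite]
    intro n m
    rw [lp.inner_eq_tsum, ← (hv n m).tsum_eq]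
    exact tsum_congr fun k => by simp [V, mul_comm]
  let X : lp (fun _ : ℕ => ℝ) 2 := ⟨x, mem x hx⟩
  have hS := hV.orthogonalFamily.hasSum_linearIsometry X
  set W := hV.orthogonalFamily.linearIsometry X with hW
  have hk : ∀ k, HasSum (fun n => v n k * x n) (W k) := fun k => by
    have := hS.mapL (lp.evalCLM ℝ (fun _ : ℕ => ℝ) 2 k)
    refine this.congr_real (fun n => ?_) rfl
    exact mul_comm (v n k) (x n)
  refine ⟨fun k => (hk k).summable, ?_⟩
  have h1 : ∑' n, x n ^ 2 = ‖W‖ ^ 2 := by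
    rw [hW, LinearIsometry.norm_map]
    exact (normsq X).tsum_eq
  rw [h1]
  simpa only [(hk _).tsum_eq] using normsq W

/-- `∑_{n ≥ 0} 1/(n+1/2)² = π²/2`, four times the odd part of `ζ(2)`. -/
lemma hasSum_half_sq : HasSum (fun n : ℕ => 1 / ((n : ℝ) + 1 / 2) ^ 2) (Real.pi ^ 2 / 2) := by
  have h := hasSum_zeta_two
  have he : HasSum (fun n : ℕ => (1 : ℝ) / ((2 * n : ℕ) : ℝ) ^ 2) (1 / 4 * (Real.pi ^ 2 / 6)) := by
    refine (h.mul_left (1 / 4)).congr_real (fun n => ?_) rfl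
    push_cast
    rw [mul_pow, one_div_mul_one_div]; norm_num
  have hs : Summable (fun n : ℕ => (1 : ℝ) / ((2 * n + 1 : ℕ) : ℝ) ^ 2) :=
    h.summable.comp_injective (i := fun n : ℕ => 2 * n + 1) fun a b hab => by simpa using hab
  have ho := (HasSum.even_add_odd (f := fun n : ℕ => (1 : ℝ) / (n : ℝ) ^ 2) he hs.hasSum).unique h
  refine (hs.hasSum.mul_left 4).congr_real (fun n => ?_) ?_
  · push_cast
    have : (2 * n + 1 : ℝ) = 2 * (n + 1 / 2) := by ring
    rw [this, mul_pow]
    field_simp; norm_num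
  · linarith

/-- Integer translation of `∑_{j ∈ ℤ} 1/(j+1/2)² = π²`, with the terms `k` and `-k` paired. -/
lemma hasSum_shift_sq (n : ℕ) : HasSum (fun k : ℕ => 1 / ((n : ℝ) + 1 / 2 + (k + 1)) ^ 2
    + 1 / ((n : ℝ) + 1 / 2 - (k + 1)) ^ 2) (Real.pi ^ 2 - 1 / ((n : ℝ) + 1 / 2) ^ 2) := by
  have hZ : HasSum (fun j : ℤ => 1 / ((j : ℝ) + 1 / 2) ^ 2) (Real.pi ^ 2) := by
    have : Real.pi ^ 2 = Real.pi ^ 2 / 2 + Real.pi ^ 2 / 2 := by ring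
    rw [this]
    refine HasSum.of_nat_of_neg_add_one ?_ ?_
    · simpa using hasSum_half_sq
    · refine hasSum_half_sq.congr_real (fun j => ?_) rfl
      push_cast
      congr 1
      ring
  have hZ' := (Equiv.addRight (n : ℤ)).hasSum_iff.mpr hZ
  have h := hZ'.nat_add_neg
  have h2 := (hasSum_nat_add_iff' 1).mpr h
  refine h2.congr_real (fun k => ?_) ?_
  · simp only [Function.comp, Equiv.coe_addRight]
    push_cast
    congr 2 <;> ring
  · simp only [Finset.sum_range_one, Function.comp, Equiv.coe_addRight]
    push_cast
    rw [neg_zero, zero_add]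
    ring

/-- The value at half-integers of the partial fraction expansion of the cotangent, where the
cotangent vanishes. -/
lemma hasSum_cot_half (n : ℕ) : HasSum (fun k : ℕ => 1 / ((n : ℝ) + 1 / 2 - (k + 1))
    + 1 / ((n : ℝ) + 1 / 2 + (k + 1))) (-(1 / ((n : ℝ) + 1 / 2))) := by
  have hz : (n + 1 / 2 : ℂ) ∈ Complex.integerComplement := by
    rintro ⟨m, hm⟩
    have : (2 * m : ℂ) = 2 * n + 1 := by rw [hm]; ring
    have : 2 * m = 2 * (n : ℤ) + 1 := by exact_mod_cast this
    omega
  have hs := (summable_cotTerm hz).hasSum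
  have hr := cot_series_rep' hz
  have hc : Complex.cot (Real.pi * (n + 1 / 2 : ℂ)) = 0 := by
    rw [Complex.cot, Complex.cos_eq_zero_iff.mpr ⟨n, by push_cast; ring⟩, zero_div]
  rw [hc] at hr
  rw [← Complex.hasSum_ofReal]
  convert hs using 1
  · ext k; simp [cotTerm]
  · simp only [cotTerm]; rw [← hr]; push_cast; ring

/-- The orthonormal columns: up to the factor `1/π`, row `0` holds `√2/(n+3/2)` and row `k ≥ 1`
holds `a_{k,n+1}`. They are the coordinates of `√(2/π) sin((n+3/2)t)` in the orthonormal cosine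
basis of `L²(0,π)`. -/
noncomputable def col (n : ℕ) : ℕ → ℝ
  | 0 => Real.sqrt 2 / ((n : ℝ) + 3 / 2) / Real.pi
  | k + 1 => aMat (k + 1) (n + 1) / Real.pi

lemma half_sub_ne (n k : ℕ) : (n : ℝ) + 3 / 2 - (k + 1) ≠ 0 := by
  intro h
  have : (2 * n + 1 : ℝ) = 2 * k := by linarith
  have : 2 * n + 1 = 2 * k := by exact_mod_cast this
  omega

lemma aMat_eq (k n : ℕ) : aMat (k + 1) (n + 1) =
    1 / ((n : ℝ) + 3 / 2 - (k + 1)) + 1 / ((n : ℝ) + 3 / 2 + (k + 1)) := by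
  unfold aMat
  push_cast
  rw [add_comm]
  congr 2 <;> ring

lemma hasSum_aMat (n : ℕ) : HasSum (fun k => aMat (k + 1) (n + 1)) (-(1 / ((n : ℝ) + 3 / 2))) := by
  have h := hasSum_cot_half (n + 1)
  have e : ((n + 1 : ℕ) : ℝ) + 1 / 2 = n + 3 / 2 := by push_cast; ring
  rw [e] at h
  simpa only [aMat_eq] using h

/-- The Gram matrix of the columns of `A` is `π² I - 2 c cᵀ` with `c_n = 1/(n+3/2)`. -/
lemma hasSum_gram (n m : ℕ) : HasSum (fun k => aMat (k + 1) (n + 1) * aMat (k + 1) (m + 1))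
    ((if n = m then Real.pi ^ 2 else 0) - 2 * (1 / ((n : ℝ) + 3 / 2)) * (1 / ((m : ℝ) + 3 / 2))) := by
  have hp : (n : ℝ) + 3 / 2 ≠ 0 := by positivity
  have hq : (m : ℝ) + 3 / 2 ≠ 0 := by positivity
  split_ifs with hnm
  · subst hnm
    have h := hasSum_shift_sq (n + 1)
    have e : ((n + 1 : ℕ) : ℝ) + 1 / 2 = n + 3 / 2 := by push_cast; ring
    rw [e] at h
    refine (h.add ((hasSum_aMat n).mul_left (1 / ((n : ℝ) + 3 / 2)))).congr_real (fun k => ?_) ?_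
    · rw [aMat_eq]
      have h1 := half_sub_ne n k
      have h2 : (n : ℝ) + 3 / 2 + (k + 1) ≠ 0 := by positivity
      generalize (n : ℝ) + 3 / 2 = p at *
      generalize (k : ℝ) + 1 = j at *
      field_simp; ring
    · field_simp; ring
  · have hd : ((m : ℝ) + 3 / 2) ^ 2 - ((n : ℝ) + 3 / 2) ^ 2 ≠ 0 := by
      have : (m : ℝ) - n ≠ 0 := sub_ne_zero.mpr (by exact_mod_cast Ne.symm hnm)
      have h3 : (m : ℝ) + n + 3 ≠ 0 := by positivity
      have : ((m : ℝ) + 3 / 2) ^ 2 - ((n : ℝ) + 3 / 2) ^ 2 = (m - n) * (m + n + 3) := by ring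
      rw [this]; positivity
    -- with `p = n+3/2`, `q = m+3/2`, `j = k+1`, the entries are `2p/(p²-j²)` and `2q/(q²-j²)`;
    -- their product splits into partial fractions in `j²`
    refine (((hasSum_aMat n).mul_left (2 * ((m : ℝ) + 3 / 2) /
      (((m : ℝ) + 3 / 2) ^ 2 - ((n : ℝ) + 3 / 2) ^ 2))).sub
      ((hasSum_aMat m).mul_left (2 * ((n : ℝ) + 3 / 2) /
      (((m : ℝ) + 3 / 2) ^ 2 - ((n : ℝ) + 3 / 2) ^ 2)))).congr_real (fun k => ?_) ?_
    · rw [aMat_eq, aMat_eq]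
      have h1 := half_sub_ne n k
      have h2 : (n : ℝ) + 3 / 2 + (k + 1) ≠ 0 := by positivity
      have h3 := half_sub_ne m k
      have h4 : (m : ℝ) + 3 / 2 + (k + 1) ≠ 0 := by positivity
      generalize (n : ℝ) + 3 / 2 = p at *
      generalize (m : ℝ) + 3 / 2 = q at *
      generalize (k : ℝ) + 1 = j at *
      field_simp; ring
    · generalize (n : ℝ) + 3 / 2 = p at *
      generalize (m : ℝ) + 3 / 2 = q at *
      field_simp; ring

lemma hasSum_col (n m : ℕ) : HasSum (fun k => col n k * col m k) (if n = m then 1 else 0) := by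
  have hpi := Real.pi_ne_zero
  have h := (hasSum_gram n m).div_const (Real.pi ^ 2)
  rw [← hasSum_nat_add_iff' 1]
  refine h.congr_real (fun k => ?_) ?_
  · simp only [col]; field_simp
  · have h2 : Real.sqrt 2 * Real.sqrt 2 = 2 := Real.mul_self_sqrt (by norm_num)
    have e : col n 0 * col m 0 = (2 * (1 / ((n : ℝ) + 3 / 2)) * (1 / ((m : ℝ) + 3 / 2))) /
        Real.pi ^ 2 := by
      simp only [col]
      rw [div_div, div_div, div_mul_div_comm, h2]
      field_simp
    rw [Finset.sum_range_one, e, sub_div]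
    congr 1
    split_ifs <;> simp [hpi]

lemma hasSum_c_sq : HasSum (fun n : ℕ => (1 / ((n : ℝ) + 3 / 2)) ^ 2) (Real.pi ^ 2 / 2 - 4) := by
  refine ((hasSum_nat_add_iff' 1).mpr hasSum_half_sq).congr_real (fun n => ?_) ?_
  · push_cast
    rw [div_pow, one_pow]
    congr 2
    ring
  · rw [Finset.sum_range_one]; norm_num

/-- Cauchy–Schwarz for real series. -/
lemma tsum_mul_sq_le (f g : ℕ → ℝ) (hf : Summable fun n => f n ^ 2)
    (hg : Summable fun n => g n ^ 2) (hfg : Summable fun n => f n * g n) :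
    (∑' n, f n * g n) ^ 2 ≤ (∑' n, f n ^ 2) * ∑' n, g n ^ 2 :=
  le_of_tendsto_of_tendsto' (hfg.hasSum.pow 2) (Filter.Tendsto.mul hf.hasSum hg.hasSum)
    fun s => Finset.sum_mul_sq_le_sq_mul_sq s f g

/-- For any square-summable sequence `x` (here `x n` denotes `x_{n+1}`, `n : ℕ`), the
series defining `(Ax)_k` converge, `Ax` is square-summable, and
`2√2‖x‖ ≤ ‖Ax‖ ≤ π‖x‖`. -/
theorem aMat_norm_bounds
    (x : ℕ → ℝ) (hx : Summable fun n : ℕ => (x n) ^ 2) :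
    (∀ k : ℕ, 1 ≤ k → Summable fun n : ℕ => aMat k (n + 1) * x n) ∧
    (Summable fun k : ℕ => (∑' n : ℕ, aMat (k + 1) (n + 1) * x n) ^ 2) ∧
    2 * Real.sqrt 2 * Real.sqrt (∑' n : ℕ, (x n) ^ 2)
      ≤ Real.sqrt (∑' k : ℕ, (∑' n : ℕ, aMat (k + 1) (n + 1) * x n) ^ 2) ∧
    Real.sqrt (∑' k : ℕ, (∑' n : ℕ, aMat (k + 1) (n + 1) * x n) ^ 2)
      ≤ Real.pi * Real.sqrt (∑' n : ℕ, (x n) ^ 2) := by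
  have hpi := Real.pi_ne_zero
  obtain ⟨hs, hP⟩ := parseval_of_orthonormal col hasSum_col x hx
  have e0 : ∀ n : ℕ, 1 / ((n : ℝ) + 3 / 2) * x n = Real.pi / Real.sqrt 2 * (col n 0 * x n) :=
      fun n => by
    simp only [col]; field_simp
  have e1 : ∀ k n, aMat (k + 1) (n + 1) * x n = Real.pi * (col n (k + 1) * x n) := fun k n => by
    simp only [col]; field_simp
  have hc : Summable fun n : ℕ => 1 / ((n : ℝ) + 3 / 2) * x n := by
    simp only [e0]; exact (hs 0).mul_left _
  set S := ∑' n, x n ^ 2 with hS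
  have hS0 : 0 ≤ S := tsum_nonneg fun n => sq_nonneg _
  have hCS := tsum_mul_sq_le _ x hasSum_c_sq.summable hx hc
  rw [hasSum_c_sq.tsum_eq] at hCS
  set T := ∑' n : ℕ, 1 / ((n : ℝ) + 3 / 2) * x n with hT
  have hA : HasSum (fun k : ℕ => (∑' n : ℕ, aMat (k + 1) (n + 1) * x n) ^ 2)
      (Real.pi ^ 2 * S - 2 * T ^ 2) := by
    have h := ((hasSum_nat_add_iff' 1).mpr hP).mul_left (Real.pi ^ 2)
    refine h.congr_real (fun k => ?_) ?_
    · simp only [e1, tsum_mul_left, mul_pow]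
    · have h2 : Real.sqrt 2 ^ 2 = 2 := Real.sq_sqrt (by norm_num)
      simp only [hT, e0, tsum_mul_left, mul_pow, div_pow, h2, Finset.sum_range_one]
      ring
  refine ⟨fun k hk => ?_, hA.summable, ?_, ?_⟩
  · obtain ⟨k, rfl⟩ := Nat.exists_eq_add_of_le' hk
    simp only [e1]; exact (hs _).mul_left _
  · rw [hA.tsum_eq]
    apply Real.le_sqrt_of_sq_le
    rw [mul_pow, mul_pow, Real.sq_sqrt hS0, Real.sq_sqrt (by norm_num)]
    linarith
  · rw [hA.tsum_eq]
    apply Real.sqrt_le_iff.mpr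
    refine ⟨by positivity, ?_⟩
    rw [mul_pow, Real.sq_sqrt hS0]
    linarith [sq_nonneg T]
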